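/- With the notation and hypotheses of the context, the degree-3 component of chPar equals, writing a_j := α_{i_j}(λ_j): c_3 − ½ Σ_{i} Σ_{λ} α_i(λ)·r_{i,λ}·D_i·D^2 + ½ Σ_{i} Σ_{λ} (α_i(λ)^2 + 2α_i(λ))·γ_{i,λ}·D_i − (1/6) Σ_{i} Σ_{λ} (α_i(λ)^3 + 3α_i(λ)^2 + 3α_i(λ))·r_{i,λ}·D_i^3 − Σ_{i} Σ_{λ} α_i(λ)·γ_{i,λ}·D + ½ Σ_{i} Σ_{λ} (α_i(λ)^2 + 2α_i(λ))·r_{i,λ}·D_i^2·D − Σ_{i} Σ_{λ} α_i(λ)·δ_{i,λ} − ½ Σ_{i_1<i_2} Σ_{λ_1,λ_2} Σ_{p ∈ P(i_1,i_2)} (a_2^2 a_1 + 2a_1 a_2 + a_1 + a_2^2 + 2a_2)·r_{(i_1,i_2),(λ_1,λ_2),p}·D_{i_2}·[D_p] − ½ Σ_{i_1<i_2} Σ_{λ_1,λ_2} Σ_{p ∈ P(i_1,i_2)} (a_1^2 a_2 + 2a_1 a_2 + a_2 + a_1^2 + 2a_1)·r_{(i_1,i_2),(λ_1,λ_2),p}·D_{i_1}·[D_p]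 + Σ_{i_1<i_2} Σ_{λ_1,λ_2} Σ_{p ∈ P(i_1,i_2)} (a_1 a_2 + a_1 + a_2)·r_{(i_1,i_2),(λ_1,λ_2),p}·D·[D_p] + Σ_{i_1<i_2} Σ_{λ_1,λ_2} (a_1 a_2 + a_1 + a_2)·γ_{(i_1,i_2),(λ_1,λ_2)} − Σ_{i_1<i_2<i_3} Σ_{λ_1,λ_2,λ_3} Σ_{p ∈ P(i_1,i_2,i_3)} (a_1 a_2 a_3 + a_1 a_2 + a_2 a_3 + a_1 a_3 + a_1 + a_2 + a_3)·r_{(i_1,i_2,i_3),(λ_1,λ_2,λ_3),p}·[D_p]. (This is the paper's new explicit formula for the third parabolic Chern character ch_3^{Par}(E), in which −Σ α·δ_{i,λ} encodes the two terms −½ Σ α·ξ_*((c_1)^2(Gr)) + Σ α·ξ_*(c_2(Gr)).) -/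

import Mathlib

open scoped Classical

noncomputable section

variable {A : Type*} [CommRing A] [Algebra ℝ A]

/-- `exp x = Σ_{k ≥ 0} x^k/k!` for a nilpotent element `x`, as a finite sum (the terms with
`k ≥ nilpotencyClass x` vanish). -/
def nexp (x : A) : A :=
  ∑ m ∈ Finset.range (nilpotencyClass x), ((m.factorial : ℝ))⁻¹ • x ^ m

/-- `J(a,b,x) = Σ_{k ≥ 0} (-1)^k ((b^{k+1} - a^{k+1})/(k+1)!) x^k`, the formal value of
`∫_a^b exp (-ρ x) dρ` for a nilpotent element `x` (a finite sum). -/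
def Jf (a b : ℝ) (x : A) : A :=
  ∑ m ∈ Finset.range (nilpotencyClass x),
    ((-1 : ℝ) ^ m * ((b ^ (m + 1) - a ^ (m + 1)) / (m + 1).factorial)) • x ^ m

variable {n : ℕ} {Sig : Fin n → Type*} [∀ i, Fintype (Sig i)] [∀ i, LinearOrder (Sig i)]

/-- `c_σ = c + Σ_{q=1}^n (-1)^q Σ_{I = {i_1<⋯<i_q}} Σ_{λ : σ_{i_j} < λ_{i_j} ∀ j} g_{I,λ}`,
the Chern character of the component sheaf `E_σ` of a locally abelian parabolic bundle,
computed via the Koszul-style resolution.  Here `λ` runs over multi-indices of covers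
(risers) `λ_i` of `Σ_i` for `i ∈ I` with `σ_i ≤ m_-(λ_i)`. -/
def cSigma (c : A) (g : ∀ I : Finset (Fin n), ((i : I) → Sig i.1 × Sig i.1) → A)
    (σ : ∀ i, Sig i) : A :=
  c + ∑ I ∈ Finset.univ.filter (fun I : Finset (Fin n) => I.Nonempty),
        (-1 : A) ^ I.card *
          ∑ lam ∈ Finset.univ.filter
              (fun lam : (i : I) → Sig i.1 × Sig i.1 =>
                ∀ i : I, (lam i).1 ⋖ (lam i).2 ∧ σ i.1 ≤ (lam i).1),
            g I lam

/-- The parabolic Chern character, given by the Iyer–Simpson integral formula evaluated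
formally: `chPar = (∏_i J(0,1,D_i))⁻¹ Σ_{σ} c_σ ∏_i J(α_-(σ_i), α_+(σ_i), D_i)`. -/
def chPar (D : Fin n → A) (αm αp : ∀ i, Sig i → ℝ) (c : A)
    (g : ∀ I : Finset (Fin n), ((i : I) → Sig i.1 × Sig i.1) → A) : A :=
  Ring.inverse (∏ i, Jf 0 1 (D i)) *
    ∑ σ : ∀ i, Sig i, cSigma c g σ * ∏ i, Jf (αm i (σ i)) (αp i (σ i)) (D i)

/-- The multi-index of covers on the singleton `{i}` determined by one cover `p` of `Σ_i`. -/
def lamOfSingle {n : ℕ} {Sig : Fin n → Type*} (i : Fin n) (p : Sig i × Sig i) :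
    (j : ({i} : Finset (Fin n))) → Sig j.1 × Sig j.1 :=
  fun j => (Finset.mem_singleton.mp j.2).symm ▸ p

/-- The multi-index of covers on the pair `{i₁, i₂}` determined by covers `p₁` of `Σ_{i₁}`
and `p₂` of `Σ_{i₂}`. -/
def lamOfPair {n : ℕ} {Sig : Fin n → Type*} (i₁ i₂ : Fin n)
    (p₁ : Sig i₁ × Sig i₁) (p₂ : Sig i₂ × Sig i₂) :
    (j : ({i₁, i₂} : Finset (Fin n))) → Sig j.1 × Sig j.1 :=
  fun j =>
    if h : j.1 = i₁ then h.symm ▸ p₁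
    else
      (by
        have hj := j.2
        simp only [Finset.mem_insert, Finset.mem_singleton] at hj
        exact ((hj.resolve_left h).symm ▸ p₂ : Sig j.1 × Sig j.1))

/-- The multi-index of covers on the triple `{i₁, i₂, i₃}` determined by covers `p₁, p₂, p₃`
of `Σ_{i₁}, Σ_{i₂}, Σ_{i₃}`. -/
def lamOfTriple {n : ℕ} {Sig : Fin n → Type*} (i₁ i₂ i₃ : Fin n)
    (p₁ : Sig i₁ × Sig i₁) (p₂ : Sig i₂ × Sig i₂) (p₃ : Sig i₃ × Sig i₃) :
    (j : ({i₁, i₂, i₃} : Finset (Fin n))) → Sig j.1 × Sig j.1 :=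
  fun j =>
    if h1 : j.1 = i₁ then h1.symm ▸ p₁
    else if h2 : j.1 = i₂ then h2.symm ▸ p₂
    else
      (by
        have hj := j.2
        simp only [Finset.mem_insert, Finset.mem_singleton] at hj
        exact (((hj.resolve_left h1).resolve_left h2).symm ▸ p₃ : Sig j.1 × Sig j.1))

set_option linter.unusedSectionVars false

/-! ### Evaluation of power series at nilpotent elements -/

/-- Evaluation of a real power series at a nilpotent element. -/
def evNil (x : A) (f : PowerSeries ℝ) : A :=
  ∑ m ∈ Finset.range (nilpotencyClass x), (PowerSeries.coeff m f) • x ^ m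

theorem evNil_eq_aeval (x : A) (f : PowerSeries ℝ) :
    evNil x f = Polynomial.aeval x (PowerSeries.trunc (nilpotencyClass x) f) := by
  rw [Polynomial.aeval_def, PowerSeries.eval₂_trunc_eq_sum_range]
  simp [evNil, Algebra.smul_def]

theorem aeval_trunc_of_nil (x : A) (hx : IsNilpotent x) (p : Polynomial ℝ) :
    Polynomial.aeval x (PowerSeries.trunc (nilpotencyClass x) (p : PowerSeries ℝ)) =
      Polynomial.aeval x p := by
  have h0 : ∀ k, nilpotencyClass x ≤ k → x ^ k = 0 := fun k hk =>
    pow_eq_zero_of_le hk (pow_nilpotencyClass hx)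
  rw [← evNil_eq_aeval, evNil, Polynomial.aeval_eq_sum_range' (n := max (nilpotencyClass x) (p.natDegree + 1))
    (by omega)]
  simp only [Polynomial.coeff_coe]
  apply Finset.sum_subset
  · intro a ha
    simp only [Finset.mem_range] at *
    omega
  · intro a _ ha
    rw [h0 a (by simpa using ha), smul_zero]

theorem evNil_mul (x : A) (hx : IsNilpotent x) (f g : PowerSeries ℝ) :
    evNil x (f * g) = evNil x f * evNil x g := by
  simp only [evNil_eq_aeval]
  rw [← PowerSeries.trunc_trunc_mul_trunc, ← Polynomial.coe_mul, aeval_trunc_of_nil x hx, map_mul]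

theorem evNil_one (x : A) (hx : IsNilpotent x) : evNil x 1 = 1 := by
  have := aeval_trunc_of_nil x hx 1
  rw [evNil_eq_aeval]
  simpa using this

/-- The power series of `J(a,b,·)`. -/
def Jps (a b : ℝ) : PowerSeries ℝ :=
  PowerSeries.mk fun m => (-1 : ℝ) ^ m * ((b ^ (m + 1) - a ^ (m + 1)) / (m + 1).factorial)

theorem Jf_eq_evNil (a b : ℝ) (x : A) : Jf a b x = evNil x (Jps a b) := by
  simp [Jf, evNil, Jps]

theorem nexp_eq_evNil (x : A) : nexp x = evNil x (PowerSeries.exp ℝ) := by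
  simp [nexp, evNil, PowerSeries.exp]

theorem X_mul_Jps (a b : ℝ) : PowerSeries.X * Jps a b =
    PowerSeries.rescale (-a) (PowerSeries.exp ℝ) - PowerSeries.rescale (-b) (PowerSeries.exp ℝ) := by
  ext m
  cases m with
  | zero =>
    rw [PowerSeries.coeff_zero_X_mul, map_sub, PowerSeries.coeff_rescale, PowerSeries.coeff_rescale]
    simp
  | succ m =>
    rw [PowerSeries.coeff_succ_X_mul]
    simp only [Jps, PowerSeries.coeff_mk, map_sub, PowerSeries.coeff_rescale, PowerSeries.exp]
    simp only [map_div₀, map_one, map_natCast, neg_pow a, neg_pow b]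
    ring

theorem Jps_shift (a : ℝ) : Jps (-1) a = PowerSeries.exp ℝ * Jps 0 (1 + a) := by
  have hX : (PowerSeries.X : PowerSeries ℝ) ≠ 0 := PowerSeries.X_ne_zero
  apply mul_left_cancel₀ hX
  have h1 : PowerSeries.rescale (1 : ℝ) (PowerSeries.exp ℝ) = PowerSeries.exp ℝ := by simp
  have h2 := PowerSeries.exp_mul_exp_eq_exp_add (1 : ℝ) (-(1 + a))
  have h3 := PowerSeries.exp_mul_exp_eq_exp_add (1 : ℝ) 0
  rw [show PowerSeries.X * (PowerSeries.exp ℝ * Jps 0 (1 + a)) =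
    PowerSeries.exp ℝ * (PowerSeries.X * Jps 0 (1 + a)) by ring, X_mul_Jps, X_mul_Jps]
  rw [h1] at h2 h3
  rw [mul_sub, h2, neg_zero, h3, neg_neg, add_zero]
  congr 3
  ring

theorem Jf_shift (a : ℝ) (x : A) (hx : IsNilpotent x) :
    Jf (-1) a x = nexp x * Jf 0 (1 + a) x := by
  rw [Jf_eq_evNil, Jf_eq_evNil, nexp_eq_evNil, Jps_shift, evNil_mul x hx]

theorem Jf_sub (a b : ℝ) (x : A) : Jf a b x = Jf 0 b x - Jf 0 a x := by
  simp only [Jf, ← Finset.sum_sub_distrib, ← sub_smul]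
  apply Finset.sum_congr rfl
  intro m _
  congr 1
  simp
  ring

theorem isUnit_Jf01 (x : A) (hx : IsNilpotent x) : IsUnit (Jf 0 1 x) := by
  have h : IsUnit (Jps 0 1) := by
    rw [PowerSeries.isUnit_iff_constantCoeff]
    simp [Jps, ← PowerSeries.coeff_zero_eq_constantCoeff_apply]
  obtain ⟨g, hg⟩ := h.exists_right_inv
  rw [Jf_eq_evNil]
  exact IsUnit.of_mul_eq_one (evNil x g) (by rw [← evNil_mul x hx, hg, evNil_one x hx])

theorem isNilpotent_sumD {ι : Type*} (s : Finset ι) (D : ι → A) (hD : ∀ i, IsNilpotent (D i)) :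
    IsNilpotent (∑ i ∈ s, D i) :=
  isNilpotent_sum fun i _ => hD i

theorem nexp_add (x y : A) (hx : IsNilpotent x) (hy : IsNilpotent y) :
    nexp (x + y) = nexp x * nexp y := by
  let _ : Module ℚ A := Module.compHom A (algebraMap ℚ ℝ)
  have key : ∀ z : A, nexp z = IsNilpotent.exp z := by
    intro z
    simp only [nexp, IsNilpotent.exp]
    apply Finset.sum_congr rfl
    intro m _
    change _ = (algebraMap ℚ ℝ ((m.factorial : ℚ)⁻¹)) • z ^ m
    simp
  rw [key, key, key, IsNilpotent.exp_add_of_commute (Commute.all x y) hx hy]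

theorem nexp_zero : nexp (0 : A) = 1 := by
  rw [nexp_eq_evNil]
  rcases subsingleton_or_nontrivial A with h | h
  · exact Subsingleton.elim _ _
  · simp [evNil]

theorem nexp_sum {ι : Type*} (s : Finset ι) (D : ι → A) (hD : ∀ i, IsNilpotent (D i)) :
    nexp (∑ i ∈ s, D i) = ∏ i ∈ s, nexp (D i) := by
  induction s using Finset.induction_on with
  | empty => simp [nexp_zero]
  | insert a s ha ih =>
    rw [Finset.sum_insert ha, Finset.prod_insert ha,
      nexp_add _ _ (hD a) (isNilpotent_sumD s D hD), ih]

/-! ### Telescoping -/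

theorem tele_le {S : Type*} [Fintype S] [LinearOrder S] (η : S) (hη : ∀ σ, η ≤ σ)
    (u v : S → ℝ) (hu : u η = -1) (huv : ∀ σ σ', σ ⋖ σ' → u σ' = v σ) (x : A) (s : S) :
    ∑ σ ∈ Finset.univ.filter (fun σ => σ ≤ s), Jf (u σ) (v σ) x = Jf (-1) (v s) x := by
  induction s using WellFoundedLT.induction with
  | ind s ih =>
    rcases (hη s).eq_or_lt with h | h
    · subst h
      rw [show Finset.univ.filter (fun σ => σ ≤ η) = {η} by
        ext σ; simpa using ⟨fun h => le_antisymm h (hη σ), fun h => h.le⟩]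
      simp [hu]
    · obtain ⟨t, _, ht⟩ := exists_le_covBy_of_lt h
      have : Finset.univ.filter (fun σ => σ ≤ s) =
          insert s (Finset.univ.filter (fun σ => σ ≤ t)) := by
        ext σ
        simp only [Finset.mem_filter, Finset.mem_univ, true_and, Finset.mem_insert]
        constructor
        · intro hs
          rcases hs.eq_or_lt with h | h
          · exact Or.inl h
          · exact Or.inr (ht.le_of_lt h)
        · rintro (h | h)
          · exact h.le
          · exact h.trans ht.le
      rw [this, Finset.sum_insert (by simpa using ht.lt), ih t ht.lt, huv t s ht,
        Jf_sub, Jf_sub (-1), Jf_sub (-1)]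
      ring

/-! ### Closed form of the parabolic Chern character -/

theorem weight_sum
    (D : Fin n → A) (hD : ∀ i, IsNilpotent (D i))
    (η τ : ∀ i, Sig i) (hη : ∀ i σ, η i ≤ σ) (hτ : ∀ i σ, σ ≤ τ i)
    (α : ∀ i, Sig i × Sig i → ℝ)
    (αp αm : ∀ i, Sig i → ℝ)
    (hαpτ : ∀ i, αp i (τ i) = 0)
    (hαpc : ∀ i (σ σ' : Sig i), σ ⋖ σ' → αp i σ = α i (σ, σ'))
    (hαmη : ∀ i, αm i (η i) = -1)
    (hαmc : ∀ i (σ σ' : Sig i), σ ⋖ σ' → αm i σ' = α i (σ, σ'))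
    (I : Finset (Fin n)) (lam : (i : I) → Sig i.1 × Sig i.1)
    (hlam : ∀ i : I, (lam i).1 ⋖ (lam i).2) :
    ∑ σ ∈ Finset.univ.filter (fun σ : ∀ i, Sig i => ∀ i : I, σ i.1 ≤ (lam i).1),
        ∏ i, Jf (αm i (σ i)) (αp i (σ i)) (D i) =
      nexp (∑ i, D i) * ((∏ i : I, Jf 0 (1 + α i.1 (lam i)) (D i.1)) *
        ∏ i ∈ Iᶜ, Jf 0 1 (D i)) := by
  have hpm : ∀ i (σ σ' : Sig i), σ ⋖ σ' → αm i σ' = αp i σ := fun i σ σ' h => by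
    rw [hαmc i σ σ' h, hαpc i σ σ' h]
  let s : ∀ i, Sig i := fun i => if h : i ∈ I then (lam ⟨i, h⟩).1 else τ i
  have hset : Finset.univ.filter (fun σ : ∀ i, Sig i => ∀ i : I, σ i.1 ≤ (lam i).1) =
      Fintype.piFinset (fun i => Finset.univ.filter (fun t : Sig i => t ≤ s i)) := by
    ext σ
    simp only [Finset.mem_filter, Finset.mem_univ, true_and, Fintype.mem_piFinset]
    constructor
    · intro h i
      by_cases hi : i ∈ I
      · simpa [s, hi] using h ⟨i, hi⟩
      · simpa [s, hi] using hτ i (σ i)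
    · intro h i
      simpa [s, i.2] using h i.1
  rw [hset, ← Finset.prod_univ_sum (fun i => Finset.univ.filter (fun t : Sig i => t ≤ s i))
    (fun i t => Jf (αm i t) (αp i t) (D i))]
  have h1 : ∀ i, ∑ t ∈ Finset.univ.filter (fun t : Sig i => t ≤ s i),
      Jf (αm i t) (αp i t) (D i) = nexp (D i) * Jf 0 (1 + αp i (s i)) (D i) := by
    intro i
    rw [tele_le (η i) (hη i) (αm i) (αp i) (hαmη i) (hpm i) (D i) (s i), Jf_shift _ _ (hD i)]
  rw [Finset.prod_congr rfl (fun i _ => h1 i), Finset.prod_mul_distrib, nexp_sum _ _ hD]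
  congr 1
  rw [← Finset.prod_mul_prod_compl I]
  congr 1
  · rw [← Finset.prod_coe_sort]
    apply Finset.prod_congr rfl
    intro i _
    have : s i.1 = (lam i).1 := by simp [s]
    rw [this, hαpc i.1 _ _ (hlam i)]
  · apply Finset.prod_congr rfl
    intro i hi
    have : s i = τ i := by simp [s, Finset.mem_compl.mp hi]
    rw [this, hαpτ, add_zero]

theorem chPar_closed
    (D : Fin n → A) (hD : ∀ i, IsNilpotent (D i))
    (η τ : ∀ i, Sig i) (hη : ∀ i σ, η i ≤ σ) (hτ : ∀ i σ, σ ≤ τ i)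
    (α : ∀ i, Sig i × Sig i → ℝ)
    (αp αm : ∀ i, Sig i → ℝ)
    (hαpτ : ∀ i, αp i (τ i) = 0)
    (hαpc : ∀ i (σ σ' : Sig i), σ ⋖ σ' → αp i σ = α i (σ, σ'))
    (hαmη : ∀ i, αm i (η i) = -1)
    (hαmc : ∀ i (σ σ' : Sig i), σ ⋖ σ' → αm i σ' = α i (σ, σ'))
    (c : A)
    (g hh : ∀ I : Finset (Fin n), ((i : I) → Sig i.1 × Sig i.1) → A)
    (hGRR : ∀ (I : Finset (Fin n)), I.Nonempty →
        ∀ lam : (i : I) → Sig i.1 × Sig i.1, (∀ i : I, (lam i).1 ⋖ (lam i).2) →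
          g I lam = (∏ i : I, Jf 0 1 (D i.1)) * hh I lam)
    (htwist : cSigma c g (fun i => η i) * nexp (∑ i, D i) = c) :
    chPar D αm αp c g = c + ∑ I ∈ Finset.univ.filter (fun I : Finset (Fin n) => I.Nonempty),
      (-1 : A) ^ I.card * ∑ lam ∈ Finset.univ.filter
        (fun lam : (i : I) → Sig i.1 × Sig i.1 => ∀ i : I, (lam i).1 ⋖ (lam i).2),
        hh I lam * (nexp (∑ i, D i) * ((∏ i : I, Jf 0 (1 + α i.1 (lam i)) (D i.1)) -
          ∏ i : I, Jf 0 1 (D i.1))) := by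
  set E := nexp (∑ i, D i) with hE
  have hU : IsUnit (∏ i, Jf 0 1 (D i)) := by
    rw [IsUnit.prod_univ_iff]
    exact fun i => isUnit_Jf01 (D i) (hD i)
  have hW := weight_sum D hD η τ hη hτ α αp αm hαpτ hαpc hαmη hαmc
  have hmain : ∑ σ : ∀ i, Sig i, cSigma c g σ * ∏ i, Jf (αm i (σ i)) (αp i (σ i)) (D i) =
      (∏ i, Jf 0 1 (D i)) * (E * c +
        ∑ I ∈ Finset.univ.filter (fun I : Finset (Fin n) => I.Nonempty),
        (-1 : A) ^ I.card * ∑ lam ∈ Finset.univ.filter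
        (fun lam : (i : I) → Sig i.1 × Sig i.1 => ∀ i : I, (lam i).1 ⋖ (lam i).2),
        hh I lam * (E * (∏ i : I, Jf 0 (1 + α i.1 (lam i)) (D i.1)))) := by
    simp only [cSigma, add_mul, Finset.sum_add_distrib, mul_add, ← Finset.mul_sum]
    congr 1
    · have := hW ∅ (fun i => absurd i.2 (Finset.notMem_empty _))
        (fun i => absurd i.2 (Finset.notMem_empty _))
      have h2 : (Finset.univ.filter (fun σ : ∀ i, Sig i => ∀ i : (∅ : Finset (Fin n)),
          σ i.1 ≤ ((fun i => absurd i.2 (Finset.notMem_empty _) :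
            (i : (∅ : Finset (Fin n))) → Sig i.1 × Sig i.1) i).1)) = Finset.univ := by
        apply Finset.filter_true_of_mem
        intro σ _ i
        exact absurd i.2 (Finset.notMem_empty _)
      rw [h2] at this
      rw [this]
      simp
      ring
    · simp only [Finset.sum_mul]
      rw [Finset.sum_comm, Finset.mul_sum]
      apply Finset.sum_congr rfl
      intro I hI
      simp only [mul_assoc]
      rw [← Finset.mul_sum, mul_left_comm]
      congr 1
      have h3 : ∀ σ : ∀ i, Sig i, (∑ lam ∈ Finset.univ.filter
              (fun lam : (i : I) → Sig i.1 × Sig i.1 =>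
                ∀ i : I, (lam i).1 ⋖ (lam i).2 ∧ σ i.1 ≤ (lam i).1), g I lam) *
              ∏ i, Jf (αm i (σ i)) (αp i (σ i)) (D i) =
          ∑ lam ∈ Finset.univ.filter
            (fun lam : (i : I) → Sig i.1 × Sig i.1 => ∀ i : I, (lam i).1 ⋖ (lam i).2),
            g I lam * (if ∀ i : I, σ i.1 ≤ (lam i).1 then
              ∏ i, Jf (αm i (σ i)) (αp i (σ i)) (D i) else 0) := by
        intro σ
        simp only [forall_and]
        rw [← Finset.filter_filter, Finset.sum_filter, Finset.sum_mul]
        apply Finset.sum_congr rfl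
        intro lam _
        split_ifs <;> simp
      rw [Finset.sum_congr rfl (fun σ _ => h3 σ), Finset.sum_comm, Finset.mul_sum]
      apply Finset.sum_congr rfl
      intro lam hlam
      have hl := (Finset.mem_filter.mp hlam).2
      rw [← Finset.mul_sum, ← Finset.sum_filter, hW I lam hl,
        hGRR I (Finset.mem_filter.mp hI).2 lam hl, ← Finset.prod_mul_prod_compl I,
        ← Finset.prod_coe_sort I]
      ring
  have hc : E * c = c - ∑ I ∈ Finset.univ.filter (fun I : Finset (Fin n) => I.Nonempty),
        (-1 : A) ^ I.card * ∑ lam ∈ Finset.univ.filter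
        (fun lam : (i : I) → Sig i.1 × Sig i.1 => ∀ i : I, (lam i).1 ⋖ (lam i).2),
        hh I lam * (E * ∏ i : I, Jf 0 1 (D i.1)) := by
    rw [eq_sub_iff_add_eq]
    conv_rhs => rw [← htwist]
    rw [cSigma, add_mul, mul_comm E c, Finset.sum_mul]
    congr 1
    apply Finset.sum_congr rfl
    intro I hI
    rw [mul_assoc, Finset.sum_mul]
    congr 1
    apply Finset.sum_congr
    · ext lam
      simp [hη]
    · intro lam hlam
      simp only [Finset.mem_filter, Finset.mem_univ, true_and] at hlam
      rw [hGRR I (Finset.mem_filter.mp hI).2 lam (fun i => (hlam i).1)]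
      ring
  rw [chPar, hmain, ← mul_assoc, Ring.inverse_mul_cancel _ hU, one_mul, hc]
  simp only [mul_sub, Finset.sum_sub_distrib]
  ring

/-! ### Homogeneous components -/

section graded

variable (𝒜 : ℕ → Submodule ℝ A) [GradedAlgebra 𝒜]

/-- The degree `k` component, as a linear map. -/
def prj (k : ℕ) : A →ₗ[ℝ] A where
  toFun a := (DirectSum.decompose 𝒜 a k : A)
  map_add' a b := by simp [DirectSum.decompose_add]
  map_smul' r a := by simp [DirectSum.decompose_smul, DirectSum.smul_apply]

theorem prj_def (k : ℕ) (a : A) : (DirectSum.decompose 𝒜 a k : A) = prj 𝒜 k a := rfl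

theorem prj_mul (k : ℕ) (a b : A) : prj 𝒜 k (a * b) =
    ∑ ij ∈ Finset.HasAntidiagonal.antidiagonal k, prj 𝒜 ij.1 a * prj 𝒜 ij.2 b := by
  simp only [← prj_def, DirectSum.decompose_mul, DirectSum.coe_mul_apply_eq_sum_antidiagonal]

theorem prj_mul_zero (a b : A) : prj 𝒜 0 (a * b) = prj 𝒜 0 a * prj 𝒜 0 b := by
  rw [prj_mul, Finset.Nat.sum_antidiagonal_eq_sum_range_succ_mk]
  simp

theorem prj_mul_one (a b : A) :
    prj 𝒜 1 (a * b) = prj 𝒜 0 a * prj 𝒜 1 b + prj 𝒜 1 a * prj 𝒜 0 b := by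
  rw [prj_mul, Finset.Nat.sum_antidiagonal_eq_sum_range_succ_mk]
  simp [Finset.sum_range_succ]

theorem prj_mul_two (a b : A) :
    prj 𝒜 2 (a * b) = prj 𝒜 0 a * prj 𝒜 2 b + prj 𝒜 1 a * prj 𝒜 1 b +
      prj 𝒜 2 a * prj 𝒜 0 b := by
  rw [prj_mul, Finset.Nat.sum_antidiagonal_eq_sum_range_succ_mk]
  simp [Finset.sum_range_succ]

theorem prj_mul_three (a b : A) :
    prj 𝒜 3 (a * b) = prj 𝒜 0 a * prj 𝒜 3 b + prj 𝒜 1 a * prj 𝒜 2 b +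
      prj 𝒜 2 a * prj 𝒜 1 b + prj 𝒜 3 a * prj 𝒜 0 b := by
  rw [prj_mul, Finset.Nat.sum_antidiagonal_eq_sum_range_succ_mk]
  simp [Finset.sum_range_succ]

theorem prj_evNil (k : ℕ) (x : A) (hx : IsNilpotent x) (hx1 : x ∈ 𝒜 1) (f : PowerSeries ℝ) :
    prj 𝒜 k (evNil x f) = (PowerSeries.coeff k f) • x ^ k := by
  have hpow : ∀ m, x ^ m ∈ 𝒜 m := fun m => by simpa using SetLike.pow_mem_graded m hx1
  have h1 : ∀ m, prj 𝒜 k (x ^ m) = if m = k then x ^ m else 0 := by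
    intro m
    split_ifs with h
    · subst h
      exact DirectSum.decompose_of_mem_same 𝒜 (hpow m)
    · exact DirectSum.decompose_of_mem_ne 𝒜 (hpow m) h
  simp only [evNil, map_sum, map_smul, h1, smul_ite, smul_zero]
  rw [Finset.sum_ite_eq' (Finset.range (nilpotencyClass x)) k]
  split_ifs with h
  · rfl
  · rw [pow_eq_zero_of_le (by simpa using h) (pow_nilpotencyClass hx), smul_zero]

theorem prj_nexp (k : ℕ) (x : A) (hx : IsNilpotent x) (hx1 : x ∈ 𝒜 1) :
    prj 𝒜 k (nexp x) = ((k.factorial : ℝ))⁻¹ • x ^ k := by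
  rw [nexp_eq_evNil, prj_evNil 𝒜 k x hx hx1]
  simp [PowerSeries.exp]

theorem prj_Jf (k : ℕ) (b : ℝ) (x : A) (hx : IsNilpotent x) (hx1 : x ∈ 𝒜 1) :
    prj 𝒜 k (Jf 0 b x) = ((-1 : ℝ) ^ k * (b ^ (k + 1) / (k + 1).factorial)) • x ^ k := by
  rw [Jf_eq_evNil, prj_evNil 𝒜 k x hx hx1]
  simp [Jps]

theorem prj3_single (S x h : A) (hS : IsNilpotent S) (hx : IsNilpotent x) (hS1 : S ∈ 𝒜 1)
    (hx1 : x ∈ 𝒜 1) (a r : ℝ) (h0 : prj 𝒜 0 h = 0) (h1 : prj 𝒜 1 h = r • x) :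
    prj 𝒜 3 (h * (nexp S * (Jf 0 (1 + a) x - Jf 0 1 x))) =
      ((1 : ℝ) / 2 * a * r) • (x * S ^ 2)
      - ((1 : ℝ) / 2 * (a ^ 2 + 2 * a)) • (prj 𝒜 2 h * x)
      + ((1 : ℝ) / 6 * (a ^ 3 + 3 * a ^ 2 + 3 * a) * r) • x ^ 3
      + a • (prj 𝒜 2 h * S)
      - ((1 : ℝ) / 2 * (a ^ 2 + 2 * a) * r) • (x ^ 2 * S)
      + a • prj 𝒜 3 h := by
  simp only [prj_mul_three, prj_mul_two, prj_mul_one, prj_mul_zero, map_sub,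
    prj_nexp 𝒜 _ S hS hS1, prj_Jf 𝒜 _ _ x hx hx1, h0, h1]
  norm_num [Nat.factorial]
  simp only [Algebra.smul_def, map_mul, map_add, map_pow, map_one,
    map_ofNat, div_eq_mul_inv]
  ring

theorem prj3_pair (S x y h : A) (hS : IsNilpotent S) (hx : IsNilpotent x) (hy : IsNilpotent y)
    (hS1 : S ∈ 𝒜 1) (hx1 : x ∈ 𝒜 1) (hy1 : y ∈ 𝒜 1) (a b : ℝ)
    (h0 : prj 𝒜 0 h = 0) (h1 : prj 𝒜 1 h = 0) :
    prj 𝒜 3 (h * (nexp S * (Jf 0 (1 + a) x * Jf 0 (1 + b) y - Jf 0 1 x * Jf 0 1 y))) =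
      -(((1 : ℝ) / 2 * (b ^ 2 * a + 2 * a * b + a + b ^ 2 + 2 * b)) • (y * prj 𝒜 2 h))
      - ((1 : ℝ) / 2 * (a ^ 2 * b + 2 * a * b + b + a ^ 2 + 2 * a)) • (x * prj 𝒜 2 h)
      + (a * b + a + b) • (S * prj 𝒜 2 h)
      + (a * b + a + b) • prj 𝒜 3 h := by
  simp only [prj_mul_three, prj_mul_two, prj_mul_one, prj_mul_zero, map_sub,
    prj_nexp 𝒜 _ S hS hS1, prj_Jf 𝒜 _ _ x hx hx1, prj_Jf 𝒜 _ _ y hy hy1, h0, h1]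
  norm_num [Nat.factorial]
  simp only [Algebra.smul_def, map_mul, map_add, map_pow, map_one,
    map_ofNat, div_eq_mul_inv]
  ring

theorem prj3_triple (S x y z h : A) (hS : IsNilpotent S) (hx : IsNilpotent x) (hy : IsNilpotent y)
    (hz : IsNilpotent z)
    (hS1 : S ∈ 𝒜 1) (hx1 : x ∈ 𝒜 1) (hy1 : y ∈ 𝒜 1) (hz1 : z ∈ 𝒜 1) (a b c : ℝ)
    (h0 : prj 𝒜 0 h = 0) (h1 : prj 𝒜 1 h = 0) (h2 : prj 𝒜 2 h = 0) :
    prj 𝒜 3 (h * (nexp S * (Jf 0 (1 + a) x * (Jf 0 (1 + b) y * Jf 0 (1 + c) z) -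
        Jf 0 1 x * (Jf 0 1 y * Jf 0 1 z)))) =
      (a * b * c + a * b + b * c + a * c + a + b + c) • prj 𝒜 3 h := by
  simp only [prj_mul_three, prj_mul_two, prj_mul_one, prj_mul_zero, map_sub,
    prj_nexp 𝒜 _ S hS hS1, prj_Jf 𝒜 _ _ x hx hx1, prj_Jf 𝒜 _ _ y hy hy1,
    prj_Jf 𝒜 _ _ z hz hz1, h0, h1, h2]
  norm_num [Nat.factorial]
  simp only [Algebra.smul_def, map_mul, map_add, map_one]
  ring

theorem prj3_high (h T : A) (h0 : ∀ m, m < 4 → prj 𝒜 m h = 0) : prj 𝒜 3 (h * T) = 0 := by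
  simp [prj_mul_three, h0]

end graded

/-! ### Re-indexing -/

theorem sum_nonempty_split {M : Type*} [AddCommGroup M] (F : Finset (Fin n) → M)
    (hF : ∀ I, 4 ≤ I.card → F I = 0) :
    ∑ I ∈ Finset.univ.filter (fun I : Finset (Fin n) => I.Nonempty), F I =
      ∑ i, F {i} + ∑ i₁, ∑ i₂ ∈ Finset.univ.filter (fun i₂ => i₁ < i₂), F {i₁, i₂} +
      ∑ i₁, ∑ i₂ ∈ Finset.univ.filter (fun i₂ => i₁ < i₂),
        ∑ i₃ ∈ Finset.univ.filter (fun i₃ => i₂ < i₃), F {i₁, i₂, i₃} := by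
  have hsplit : ∑ I ∈ Finset.univ.filter (fun I : Finset (Fin n) => I.Nonempty), F I =
      ∑ I ∈ Finset.powersetCard 1 (Finset.univ : Finset (Fin n)), F I +
      ∑ I ∈ Finset.powersetCard 2 (Finset.univ : Finset (Fin n)), F I +
      ∑ I ∈ Finset.powersetCard 3 (Finset.univ : Finset (Fin n)), F I := by
    have hp : ∀ k, Finset.powersetCard k (Finset.univ : Finset (Fin n)) =
        Finset.univ.filter (fun I => I.card = k) := by
      intro k; ext I; simp [Finset.mem_powersetCard]
    simp only [hp, Finset.sum_filter, ← Finset.sum_add_distrib]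
    apply Finset.sum_congr rfl
    intro I _
    rcases lt_or_ge I.card 4 with h | h
    · have h5 : I.Nonempty ↔ I.card ≠ 0 := by
        rw [← Finset.card_pos]; omega
      simp only [h5]
      interval_cases I.card <;> simp
    · simp [hF I h]
  rw [hsplit]
  congr 1
  · congr 1
    · rw [Finset.powersetCard_one, Finset.sum_map]
      rfl
    · rw [Finset.sum_sigma']
      symm
      apply Finset.sum_bij (fun x _ => ({x.1, x.2} : Finset (Fin n)))
      · rintro ⟨i, j⟩ h
        simp only [Finset.mem_sigma, Finset.mem_univ, Finset.mem_filter, true_and] at h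
        simp [Finset.mem_powersetCard, Finset.card_pair h.ne]
      · rintro ⟨i, j⟩ h ⟨i', j'⟩ h' he
        simp only [Finset.mem_sigma, Finset.mem_univ, Finset.mem_filter, true_and] at h h'
        simp only [Finset.ext_iff, Finset.mem_insert, Finset.mem_singleton] at he
        have e1 := he i
        have e2 := he j
        have e3 := he i'
        have e4 := he j'
        simp only [Sigma.mk.injEq, heq_eq_eq]
        simp at e1 e2 e3 e4
        omega
      · intro I hI
        obtain ⟨x, y, hxy, rfl⟩ := Finset.card_eq_two.mp (Finset.mem_powersetCard.mp hI).2
        rcases lt_or_gt_of_ne hxy with h | h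
        · exact ⟨⟨x, y⟩, by simpa using h, rfl⟩
        · exact ⟨⟨y, x⟩, by simpa using h, Finset.pair_comm _ _⟩
      · intros; rfl
  · simp only [Finset.sum_sigma']
    symm
    apply Finset.sum_bij (fun x _ => ({x.1, x.2.1, x.2.2} : Finset (Fin n)))
    · rintro ⟨i, ⟨j, k⟩⟩ h
      simp only [Finset.mem_sigma, Finset.mem_univ, Finset.mem_filter, true_and] at h
      simp only [Finset.mem_powersetCard, Finset.subset_univ, true_and]
      exact Finset.card_eq_three.mpr ⟨i, j, k, h.1.ne, (h.1.trans h.2).ne, h.2.ne, rfl⟩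
    · rintro ⟨i, ⟨j, k⟩⟩ h ⟨i', ⟨j', k'⟩⟩ h' he
      simp only [Finset.mem_sigma, Finset.mem_univ, Finset.mem_filter, true_and] at h h'
      simp only [Finset.ext_iff, Finset.mem_insert, Finset.mem_singleton] at he
      have e1 := he i
      have e2 := he j
      have e3 := he k
      have e4 := he i'
      have e5 := he j'
      have e6 := he k'
      simp at e1 e2 e3 e4 e5 e6
      have : i = i' ∧ j = j' ∧ k = k' := by omega
      obtain ⟨rfl, rfl, rfl⟩ := this
      rfl
    · intro I hI
      obtain ⟨x, y, z, hxy, hxz, hyz, rfl⟩ :=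
        Finset.card_eq_three.mp (Finset.mem_powersetCard.mp hI).2
      rcases lt_or_gt_of_ne hxy with h | h <;> rcases lt_or_gt_of_ne hxz with h' | h' <;>
        rcases lt_or_gt_of_ne hyz with h'' | h''
      · exact ⟨⟨x, ⟨y, z⟩⟩, by simp [h, h''], by ext; simp⟩
      · exact ⟨⟨x, ⟨z, y⟩⟩, by simp [h', h''], by ext; simp; tauto⟩
      · exact absurd (h.trans h'') h'.asymm
      · exact ⟨⟨z, ⟨x, y⟩⟩, by simp [h', h], by ext; simp; tauto⟩
      · exact ⟨⟨y, ⟨x, z⟩⟩, by simp [h, h'], by ext; simp; tauto⟩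
      · exact absurd (h'.trans h'') h.asymm
      · exact ⟨⟨y, ⟨z, x⟩⟩, by simp [h', h''], by ext; simp; tauto⟩
      · exact ⟨⟨z, ⟨y, x⟩⟩, by simp [h, h''], by ext; simp; tauto⟩
    · intros; rfl

theorem lamOfSingle_self (i : Fin n) (p : Sig i × Sig i) (h) :
    lamOfSingle i p ⟨i, h⟩ = p := rfl

theorem sum_lam_single {M : Type*} [AddCommGroup M] (i : Fin n)
    (F : ((j : ({i} : Finset (Fin n))) → Sig j.1 × Sig j.1) → M) :
    ∑ lam ∈ Finset.univ.filter (fun lam : (j : ({i} : Finset (Fin n))) → Sig j.1 × Sig j.1 =>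
        ∀ j : ({i} : Finset (Fin n)), (lam j).1 ⋖ (lam j).2), F lam =
      ∑ p ∈ Finset.univ.filter (fun p : Sig i × Sig i => p.1 ⋖ p.2), F (lamOfSingle i p) := by
  symm
  apply Finset.sum_nbij' (fun p => lamOfSingle i p) (fun lam => lam ⟨i, by simp⟩)
  · intro p hp
    simp only [Finset.mem_filter, Finset.mem_univ, true_and] at hp ⊢
    rintro ⟨j, hj⟩
    obtain rfl := Finset.mem_singleton.mp hj
    exact hp
  · intro lam hl
    simp only [Finset.mem_filter, Finset.mem_univ, true_and] at hl ⊢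
    exact hl _
  · intros; rfl
  · intro lam hl
    funext ⟨j, hj⟩
    obtain rfl := Finset.mem_singleton.mp hj
    rfl
  · intros; rfl

theorem lamOfPair_fst (i₁ i₂ : Fin n) (p₁ : Sig i₁ × Sig i₁) (p₂ : Sig i₂ × Sig i₂) (h) :
    lamOfPair i₁ i₂ p₁ p₂ ⟨i₁, h⟩ = p₁ := by simp [lamOfPair]

theorem lamOfPair_snd (i₁ i₂ : Fin n) (h12 : i₁ ≠ i₂)
    (p₁ : Sig i₁ × Sig i₁) (p₂ : Sig i₂ × Sig i₂) (h) :
    lamOfPair i₁ i₂ p₁ p₂ ⟨i₂, h⟩ = p₂ := by simp [lamOfPair, h12.symm]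

theorem sum_lam_pair {M : Type*} [AddCommGroup M] (i₁ i₂ : Fin n) (h12 : i₁ ≠ i₂)
    (F : ((j : ({i₁, i₂} : Finset (Fin n))) → Sig j.1 × Sig j.1) → M) :
    ∑ lam ∈ Finset.univ.filter
        (fun lam : (j : ({i₁, i₂} : Finset (Fin n))) → Sig j.1 × Sig j.1 =>
        ∀ j : ({i₁, i₂} : Finset (Fin n)), (lam j).1 ⋖ (lam j).2), F lam =
      ∑ p₁ ∈ Finset.univ.filter (fun p : Sig i₁ × Sig i₁ => p.1 ⋖ p.2),
      ∑ p₂ ∈ Finset.univ.filter (fun p : Sig i₂ × Sig i₂ => p.1 ⋖ p.2),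
        F (lamOfPair i₁ i₂ p₁ p₂) := by
  rw [← Finset.sum_product']
  symm
  apply Finset.sum_nbij' (fun p => lamOfPair i₁ i₂ p.1 p.2)
    (fun lam => (lam ⟨i₁, by simp⟩, lam ⟨i₂, by simp⟩))
  · rintro ⟨p₁, p₂⟩ hp
    simp only [Finset.mem_product, Finset.mem_filter, Finset.mem_univ, true_and] at hp ⊢
    rintro ⟨j, hj⟩
    rcases (by simpa using hj : j = i₁ ∨ j = i₂) with rfl | rfl
    · rw [lamOfPair_fst]; exact hp.1
    · rw [lamOfPair_snd _ _ h12]; exact hp.2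
  · intro lam hl
    simp only [Finset.mem_product, Finset.mem_filter, Finset.mem_univ, true_and] at hl ⊢
    exact ⟨hl _, hl _⟩
  · intro p _
    simp only [lamOfPair_fst, lamOfPair_snd _ _ h12]
  · intro lam hl
    funext ⟨j, hj⟩
    rcases (by simpa using hj : j = i₁ ∨ j = i₂) with rfl | rfl
    · rw [lamOfPair_fst]
    · rw [lamOfPair_snd _ _ h12]
  · intros; rfl

theorem lamOfTriple_fst (i₁ i₂ i₃ : Fin n) (p₁ : Sig i₁ × Sig i₁) (p₂ : Sig i₂ × Sig i₂)
    (p₃ : Sig i₃ × Sig i₃) (h) :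
    lamOfTriple i₁ i₂ i₃ p₁ p₂ p₃ ⟨i₁, h⟩ = p₁ := by simp [lamOfTriple]

theorem lamOfTriple_snd (i₁ i₂ i₃ : Fin n) (h12 : i₁ ≠ i₂) (p₁ : Sig i₁ × Sig i₁)
    (p₂ : Sig i₂ × Sig i₂) (p₃ : Sig i₃ × Sig i₃) (h) :
    lamOfTriple i₁ i₂ i₃ p₁ p₂ p₃ ⟨i₂, h⟩ = p₂ := by simp [lamOfTriple, h12.symm]

theorem lamOfTriple_trd (i₁ i₂ i₃ : Fin n) (h13 : i₁ ≠ i₃) (h23 : i₂ ≠ i₃)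
    (p₁ : Sig i₁ × Sig i₁) (p₂ : Sig i₂ × Sig i₂) (p₃ : Sig i₃ × Sig i₃) (h) :
    lamOfTriple i₁ i₂ i₃ p₁ p₂ p₃ ⟨i₃, h⟩ = p₃ := by simp [lamOfTriple, h13.symm, h23.symm]

theorem sum_lam_triple {M : Type*} [AddCommGroup M] (i₁ i₂ i₃ : Fin n) (h12 : i₁ ≠ i₂)
    (h13 : i₁ ≠ i₃) (h23 : i₂ ≠ i₃)
    (F : ((j : ({i₁, i₂, i₃} : Finset (Fin n))) → Sig j.1 × Sig j.1) → M) :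
    ∑ lam ∈ Finset.univ.filter
        (fun lam : (j : ({i₁, i₂, i₃} : Finset (Fin n))) → Sig j.1 × Sig j.1 =>
        ∀ j : ({i₁, i₂, i₃} : Finset (Fin n)), (lam j).1 ⋖ (lam j).2), F lam =
      ∑ p₁ ∈ Finset.univ.filter (fun p : Sig i₁ × Sig i₁ => p.1 ⋖ p.2),
      ∑ p₂ ∈ Finset.univ.filter (fun p : Sig i₂ × Sig i₂ => p.1 ⋖ p.2),
      ∑ p₃ ∈ Finset.univ.filter (fun p : Sig i₃ × Sig i₃ => p.1 ⋖ p.2),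
        F (lamOfTriple i₁ i₂ i₃ p₁ p₂ p₃) := by
  simp only [← Finset.sum_product']
  symm
  apply Finset.sum_nbij' (fun p => lamOfTriple i₁ i₂ i₃ p.1 p.2.1 p.2.2)
    (fun lam => (lam ⟨i₁, by simp⟩, lam ⟨i₂, by simp⟩, lam ⟨i₃, by simp⟩))
  · rintro ⟨p₁, p₂, p₃⟩ hp
    simp only [Finset.mem_product, Finset.mem_filter, Finset.mem_univ, true_and] at hp ⊢
    rintro ⟨j, hj⟩
    rcases (by simpa using hj : j = i₁ ∨ j = i₂ ∨ j = i₃) with rfl | rfl | rfl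
    · rw [lamOfTriple_fst]; exact hp.1
    · rw [lamOfTriple_snd _ _ _ h12]; exact hp.2.1
    · rw [lamOfTriple_trd _ _ _ h13 h23]; exact hp.2.2
  · intro lam hl
    simp only [Finset.mem_product, Finset.mem_filter, Finset.mem_univ, true_and] at hl ⊢
    exact ⟨hl _, hl _, hl _⟩
  · intro p _
    simp only [lamOfTriple_fst, lamOfTriple_snd _ _ _ h12, lamOfTriple_trd _ _ _ h13 h23]
  · intro lam hl
    funext ⟨j, hj⟩
    rcases (by simpa using hj : j = i₁ ∨ j = i₂ ∨ j = i₃) with rfl | rfl | rfl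
    · rw [lamOfTriple_fst]
    · rw [lamOfTriple_snd _ _ _ h12]
    · rw [lamOfTriple_trd _ _ _ h13 h23]
  · intros; rfl

theorem prod_sub_single (i : Fin n) (f : ({i} : Finset (Fin n)) → A) :
    ∏ j, f j = f ⟨i, by simp⟩ := by
  rw [show (Finset.univ : Finset ({i} : Finset (Fin n))) = {⟨i, by simp⟩} by
    ext ⟨j, hj⟩
    simp only [Finset.mem_insert, Finset.mem_singleton] at hj
    simp only [Finset.mem_univ, Finset.mem_insert, Finset.mem_singleton, Subtype.mk.injEq, hj], Finset.prod_singleton]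

theorem prod_sub_pair (i₁ i₂ : Fin n) (h12 : i₁ ≠ i₂) (f : ({i₁, i₂} : Finset (Fin n)) → A) :
    ∏ j, f j = f ⟨i₁, by simp⟩ * f ⟨i₂, by simp⟩ := by
  rw [show (Finset.univ : Finset ({i₁, i₂} : Finset (Fin n))) =
      {⟨i₁, by simp⟩, ⟨i₂, by simp⟩} by
    ext ⟨j, hj⟩
    simp only [Finset.mem_insert, Finset.mem_singleton] at hj
    simp only [Finset.mem_univ, Finset.mem_insert, Finset.mem_singleton, Subtype.mk.injEq, hj], Finset.prod_pair (by simpa using h12)]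

theorem prod_sub_triple (i₁ i₂ i₃ : Fin n) (h12 : i₁ ≠ i₂) (h13 : i₁ ≠ i₃) (h23 : i₂ ≠ i₃)
    (f : ({i₁, i₂, i₃} : Finset (Fin n)) → A) :
    ∏ j, f j = f ⟨i₁, by simp⟩ * (f ⟨i₂, by simp⟩ * f ⟨i₃, by simp⟩) := by
  rw [show (Finset.univ : Finset ({i₁, i₂, i₃} : Finset (Fin n))) =
      {⟨i₁, by simp⟩, ⟨i₂, by simp⟩, ⟨i₃, by simp⟩} by
    ext ⟨j, hj⟩
    simp only [Finset.mem_insert, Finset.mem_singleton] at hj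
    simp only [Finset.mem_univ, Finset.mem_insert, Finset.mem_singleton, Subtype.mk.injEq, hj], Finset.prod_insert (by simp [h12, h13]),
    Finset.prod_pair (by simpa using h23)]

/-- Degree `3` part of the parabolic Chern character: the paper's explicit formula for
`ch_3^{Par}(E)` in terms of the weights `α`, the ranks `r` of the graded pieces, the
classes `γ_{i,λ} = ξ_{i*}(c_1(Gr^i_λ))`, `δ_{i,λ} = ξ_{i*}(½(c_1² - 2c_2)(Gr^i_λ))`,
`γ_{(i₁,i₂),(λ₁,λ₂)} = ξ_{i₁i₂*}(c_1(Gr^{i₁,i₂}))` (encoded as the degree `2`, `3`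
components of `h_{I,λ}`), and the cycle classes `[D_p]` of the components of the double
and triple intersections. -/
theorem chPar_deg3
    {A : Type*} [CommRing A] [Algebra ℝ A]
    {n : ℕ} (hn : 1 ≤ n)
    {Sig : Fin n → Type*} [∀ i, Fintype (Sig i)] [∀ i, LinearOrder (Sig i)]
    [∀ i, Nontrivial (Sig i)]
    (D : Fin n → A) (hD : ∀ i, IsNilpotent (D i))
    (η τ : ∀ i, Sig i) (hη : ∀ i σ, η i ≤ σ) (hτ : ∀ i σ, σ ≤ τ i)
    (α : ∀ i, Sig i × Sig i → ℝ)
    (hα : ∀ i p, p.1 ⋖ p.2 → α i p ∈ Set.Ioc (-1 : ℝ) 0)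
    (hαmono : ∀ i (p p' : Sig i × Sig i),
        p.1 ⋖ p.2 → p'.1 ⋖ p'.2 → p.1 ≤ p'.1 → α i p ≤ α i p')
    (αp αm : ∀ i, Sig i → ℝ)
    (hαpτ : ∀ i, αp i (τ i) = 0)
    (hαpc : ∀ i (σ σ' : Sig i), σ ⋖ σ' → αp i σ = α i (σ, σ'))
    (hαmη : ∀ i, αm i (η i) = -1)
    (hαmc : ∀ i (σ σ' : Sig i), σ ⋖ σ' → αm i σ' = α i (σ, σ'))
    (c : A)
    (g hh : ∀ I : Finset (Fin n), ((i : I) → Sig i.1 × Sig i.1) → A)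
    (hGRR : ∀ (I : Finset (Fin n)), I.Nonempty →
        ∀ lam : (i : I) → Sig i.1 × Sig i.1, (∀ i : I, (lam i).1 ⋖ (lam i).2) →
          g I lam = (∏ i : I, Jf 0 1 (D i.1)) * hh I lam)
    (htwist : cSigma c g (fun i => η i) * nexp (∑ i, D i) = c)
    (𝒜 : ℕ → Submodule ℝ A) [GradedAlgebra 𝒜]
    (hD1 : ∀ i, D i ∈ 𝒜 1)
    (hhlow : ∀ (I : Finset (Fin n)) (lam : (i : I) → Sig i.1 × Sig i.1),
        (∀ i : I, (lam i).1 ⋖ (lam i).2) → ∀ m, m < I.card →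
          (DirectSum.decompose 𝒜 (hh I lam) m : A) = 0)
    (r : ∀ i, Sig i × Sig i → ℚ)
    (hr0 : ∀ i (p : Sig i × Sig i), p.1 ⋖ p.2 → 0 ≤ r i p)
    (hr1 : ∀ i (p : Sig i × Sig i), p.1 ⋖ p.2 →
        (DirectSum.decompose 𝒜 (hh {i} (lamOfSingle i p)) 1 : A) = (r i p : ℝ) • D i)
    (P : Fin n → Fin n → Type) [∀ i j, Fintype (P i j)]
    (Dp : ∀ i₁ i₂, P i₁ i₂ → A)
    (hDp2 : ∀ i₁ i₂, i₁ < i₂ → ∀ p, Dp i₁ i₂ p ∈ 𝒜 2)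
    (hDprod : ∀ i₁ i₂, i₁ < i₂ → D i₁ * D i₂ = ∑ p : P i₁ i₂, Dp i₁ i₂ p)
    (rp : ∀ i₁ i₂, (Sig i₁ × Sig i₁) → (Sig i₂ × Sig i₂) → P i₁ i₂ → ℚ)
    (hrp0 : ∀ i₁ i₂, i₁ < i₂ → ∀ (p₁ : Sig i₁ × Sig i₁) (p₂ : Sig i₂ × Sig i₂)
        (p : P i₁ i₂), p₁.1 ⋖ p₁.2 → p₂.1 ⋖ p₂.2 → 0 ≤ rp i₁ i₂ p₁ p₂ p)
    (hrp2 : ∀ i₁ i₂, i₁ < i₂ → ∀ (p₁ : Sig i₁ × Sig i₁) (p₂ : Sig i₂ × Sig i₂),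
        p₁.1 ⋖ p₁.2 → p₂.1 ⋖ p₂.2 →
          (DirectSum.decompose 𝒜 (hh {i₁, i₂} (lamOfPair i₁ i₂ p₁ p₂)) 2 : A) =
            ∑ p : P i₁ i₂, (rp i₁ i₂ p₁ p₂ p : ℝ) • Dp i₁ i₂ p)
    (P3 : Fin n → Fin n → Fin n → Type) [∀ i j l, Fintype (P3 i j l)]
    (Dp3 : ∀ i₁ i₂ i₃, P3 i₁ i₂ i₃ → A)
    (hDp3 : ∀ i₁ i₂ i₃, i₁ < i₂ → i₂ < i₃ → ∀ p, Dp3 i₁ i₂ i₃ p ∈ 𝒜 3)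
    (hDprod3 : ∀ i₁ i₂ i₃, i₁ < i₂ → i₂ < i₃ →
        D i₁ * D i₂ * D i₃ = ∑ p : P3 i₁ i₂ i₃, Dp3 i₁ i₂ i₃ p)
    (r3 : ∀ i₁ i₂ i₃, (Sig i₁ × Sig i₁) → (Sig i₂ × Sig i₂) → (Sig i₃ × Sig i₃) →
        P3 i₁ i₂ i₃ → ℚ)
    (hr30 : ∀ i₁ i₂ i₃, i₁ < i₂ → i₂ < i₃ →
        ∀ (p₁ : Sig i₁ × Sig i₁) (p₂ : Sig i₂ × Sig i₂) (p₃ : Sig i₃ × Sig i₃)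
          (p : P3 i₁ i₂ i₃), p₁.1 ⋖ p₁.2 → p₂.1 ⋖ p₂.2 → p₃.1 ⋖ p₃.2 →
            0 ≤ r3 i₁ i₂ i₃ p₁ p₂ p₃ p)
    (hr3 : ∀ i₁ i₂ i₃, i₁ < i₂ → i₂ < i₃ →
        ∀ (p₁ : Sig i₁ × Sig i₁) (p₂ : Sig i₂ × Sig i₂) (p₃ : Sig i₃ × Sig i₃),
          p₁.1 ⋖ p₁.2 → p₂.1 ⋖ p₂.2 → p₃.1 ⋖ p₃.2 →
            (DirectSum.decompose 𝒜 (hh {i₁, i₂, i₃}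
                (lamOfTriple i₁ i₂ i₃ p₁ p₂ p₃)) 3 : A) =
              ∑ p : P3 i₁ i₂ i₃, (r3 i₁ i₂ i₃ p₁ p₂ p₃ p : ℝ) • Dp3 i₁ i₂ i₃ p) :
    (DirectSum.decompose 𝒜 (chPar D αm αp c g) 3 : A) =
      (DirectSum.decompose 𝒜 c 3 : A) -
        (∑ i, ∑ p ∈ Finset.univ.filter (fun p : Sig i × Sig i => p.1 ⋖ p.2),
          ((1 : ℝ) / 2 * α i p * (r i p : ℝ)) • (D i * (∑ i', D i') ^ 2)) +
        (∑ i, ∑ p ∈ Finset.univ.filter (fun p : Sig i × Sig i => p.1 ⋖ p.2),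
          ((1 : ℝ) / 2 * (α i p ^ 2 + 2 * α i p)) •
            ((DirectSum.decompose 𝒜 (hh {i} (lamOfSingle i p)) 2 : A) * D i)) -
        (∑ i, ∑ p ∈ Finset.univ.filter (fun p : Sig i × Sig i => p.1 ⋖ p.2),
          ((1 : ℝ) / 6 * (α i p ^ 3 + 3 * α i p ^ 2 + 3 * α i p) * (r i p : ℝ)) •
            (D i ^ 3)) -
        (∑ i, ∑ p ∈ Finset.univ.filter (fun p : Sig i × Sig i => p.1 ⋖ p.2),
          α i p •
            ((DirectSum.decompose 𝒜 (hh {i} (lamOfSingle i p)) 2 : A) * ∑ i', D i')) +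
        (∑ i, ∑ p ∈ Finset.univ.filter (fun p : Sig i × Sig i => p.1 ⋖ p.2),
          ((1 : ℝ) / 2 * (α i p ^ 2 + 2 * α i p) * (r i p : ℝ)) •
            (D i ^ 2 * ∑ i', D i')) -
        (∑ i, ∑ p ∈ Finset.univ.filter (fun p : Sig i × Sig i => p.1 ⋖ p.2),
          α i p • (DirectSum.decompose 𝒜 (hh {i} (lamOfSingle i p)) 3 : A)) -
        (∑ i₁, ∑ i₂ ∈ Finset.univ.filter (fun i₂ => i₁ < i₂),
          ∑ p₁ ∈ Finset.univ.filter (fun p₁ : Sig i₁ × Sig i₁ => p₁.1 ⋖ p₁.2),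
            ∑ p₂ ∈ Finset.univ.filter (fun p₂ : Sig i₂ × Sig i₂ => p₂.1 ⋖ p₂.2),
              ∑ p : P i₁ i₂,
                ((1 : ℝ) / 2 *
                    (α i₂ p₂ ^ 2 * α i₁ p₁ + 2 * α i₁ p₁ * α i₂ p₂ + α i₁ p₁ +
                      α i₂ p₂ ^ 2 + 2 * α i₂ p₂) * (rp i₁ i₂ p₁ p₂ p : ℝ)) •
                  (D i₂ * Dp i₁ i₂ p)) -
        (∑ i₁, ∑ i₂ ∈ Finset.univ.filter (fun i₂ => i₁ < i₂),
          ∑ p₁ ∈ Finset.univ.filter (fun p₁ : Sig i₁ × Sig i₁ => p₁.1 ⋖ p₁.2),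
            ∑ p₂ ∈ Finset.univ.filter (fun p₂ : Sig i₂ × Sig i₂ => p₂.1 ⋖ p₂.2),
              ∑ p : P i₁ i₂,
                ((1 : ℝ) / 2 *
                    (α i₁ p₁ ^ 2 * α i₂ p₂ + 2 * α i₁ p₁ * α i₂ p₂ + α i₂ p₂ +
                      α i₁ p₁ ^ 2 + 2 * α i₁ p₁) * (rp i₁ i₂ p₁ p₂ p : ℝ)) •
                  (D i₁ * Dp i₁ i₂ p)) +
        (∑ i₁, ∑ i₂ ∈ Finset.univ.filter (fun i₂ => i₁ < i₂),
          ∑ p₁ ∈ Finset.univ.filter (fun p₁ : Sig i₁ × Sig i₁ => p₁.1 ⋖ p₁.2),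
            ∑ p₂ ∈ Finset.univ.filter (fun p₂ : Sig i₂ × Sig i₂ => p₂.1 ⋖ p₂.2),
              ∑ p : P i₁ i₂,
                ((α i₁ p₁ * α i₂ p₂ + α i₁ p₁ + α i₂ p₂) * (rp i₁ i₂ p₁ p₂ p : ℝ)) •
                  ((∑ i', D i') * Dp i₁ i₂ p)) +
        (∑ i₁, ∑ i₂ ∈ Finset.univ.filter (fun i₂ => i₁ < i₂),
          ∑ p₁ ∈ Finset.univ.filter (fun p₁ : Sig i₁ × Sig i₁ => p₁.1 ⋖ p₁.2),
            ∑ p₂ ∈ Finset.univ.filter (fun p₂ : Sig i₂ × Sig i₂ => p₂.1 ⋖ p₂.2),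
              (α i₁ p₁ * α i₂ p₂ + α i₁ p₁ + α i₂ p₂) •
                (DirectSum.decompose 𝒜 (hh {i₁, i₂} (lamOfPair i₁ i₂ p₁ p₂)) 3 : A)) -
        ∑ i₁, ∑ i₂ ∈ Finset.univ.filter (fun i₂ => i₁ < i₂),
          ∑ i₃ ∈ Finset.univ.filter (fun i₃ => i₂ < i₃),
            ∑ p₁ ∈ Finset.univ.filter (fun p₁ : Sig i₁ × Sig i₁ => p₁.1 ⋖ p₁.2),
              ∑ p₂ ∈ Finset.univ.filter (fun p₂ : Sig i₂ × Sig i₂ => p₂.1 ⋖ p₂.2),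
                ∑ p₃ ∈ Finset.univ.filter (fun p₃ : Sig i₃ × Sig i₃ => p₃.1 ⋖ p₃.2),
                  ∑ p : P3 i₁ i₂ i₃,
                    ((α i₁ p₁ * α i₂ p₂ * α i₃ p₃ + α i₁ p₁ * α i₂ p₂ +
                        α i₂ p₂ * α i₃ p₃ + α i₁ p₁ * α i₃ p₃ + α i₁ p₁ + α i₂ p₂ +
                        α i₃ p₃) * (r3 i₁ i₂ i₃ p₁ p₂ p₃ p : ℝ)) •
                      Dp3 i₁ i₂ i₃ p := by
  simp only [prj_def] at hhlow hr1 hrp2 hr3 ⊢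
  have hS : IsNilpotent (∑ i, D i) := isNilpotent_sumD _ D hD
  have hS1 : (∑ i, D i) ∈ 𝒜 1 := Submodule.sum_mem _ fun i _ => hD1 i
  rw [chPar_closed D hD η τ hη hτ α αp αm hαpτ hαpc hαmη hαmc c g hh hGRR htwist,
    map_add, map_sum]
  generalize (∑ i, D i) = S at hS hS1 ⊢
  rw [sum_nonempty_split]
  swap
  · intro I hI
    have h1 : (-1 : A) ^ I.card = algebraMap ℝ A ((-1) ^ I.card) := by simp
    rw [h1, ← Algebra.smul_def, map_smul, map_sum, Finset.sum_eq_zero, smul_zero]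
    intro lam hlam
    apply prj3_high
    intro m hm
    exact hhlow I lam (Finset.mem_filter.mp hlam).2 m (by omega)
  have hF1 : ∀ i, prj 𝒜 3 ((-1 : A) ^ ({i} : Finset (Fin n)).card * ∑ lam ∈ Finset.univ.filter
        (fun lam : (j : ({i} : Finset (Fin n))) → Sig j.1 × Sig j.1 =>
          ∀ j : ({i} : Finset (Fin n)), (lam j).1 ⋖ (lam j).2),
        hh {i} lam * (nexp S *
          ((∏ j : ({i} : Finset (Fin n)), Jf 0 (1 + α j.1 (lam j)) (D j.1)) -
          ∏ j : ({i} : Finset (Fin n)), Jf 0 1 (D j.1)))) =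
      ∑ p ∈ Finset.univ.filter (fun p : Sig i × Sig i => p.1 ⋖ p.2),
        (-(((1 : ℝ) / 2 * α i p * (r i p : ℝ)) • (D i * S ^ 2))
        + ((1 : ℝ) / 2 * (α i p ^ 2 + 2 * α i p)) •
            (prj 𝒜 2 (hh {i} (lamOfSingle i p)) * D i)
        - ((1 : ℝ) / 6 * (α i p ^ 3 + 3 * α i p ^ 2 + 3 * α i p) * (r i p : ℝ)) • (D i ^ 3)
        - α i p • (prj 𝒜 2 (hh {i} (lamOfSingle i p)) * S)
        + ((1 : ℝ) / 2 * (α i p ^ 2 + 2 * α i p) * (r i p : ℝ)) • (D i ^ 2 * S)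
        - α i p • prj 𝒜 3 (hh {i} (lamOfSingle i p))) := by
    intro i
    rw [Finset.card_singleton, pow_one, neg_one_mul, map_neg, map_sum, sum_lam_single,
      ← Finset.sum_neg_distrib]
    apply Finset.sum_congr rfl
    intro p hp
    have hp := (Finset.mem_filter.mp hp).2
    have hcov : ∀ j : ({i} : Finset (Fin n)), (lamOfSingle i p j).1 ⋖ (lamOfSingle i p j).2 := by
      rintro ⟨j, hj⟩
      obtain rfl := Finset.mem_singleton.mp hj
      exact hp
    rw [prod_sub_single, prod_sub_single, lamOfSingle_self,
      prj3_single 𝒜 S (D i) _ hS (hD i) hS1 (hD1 i) (α i p) (r i p)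
        (hhlow _ _ hcov 0 (by simp)) (hr1 i p hp)]
    abel
  have hF2 : ∀ i₁ i₂, i₁ < i₂ →
      prj 𝒜 3 ((-1 : A) ^ ({i₁, i₂} : Finset (Fin n)).card * ∑ lam ∈ Finset.univ.filter
        (fun lam : (j : ({i₁, i₂} : Finset (Fin n))) → Sig j.1 × Sig j.1 =>
          ∀ j : ({i₁, i₂} : Finset (Fin n)), (lam j).1 ⋖ (lam j).2),
        hh {i₁, i₂} lam * (nexp S *
          ((∏ j : ({i₁, i₂} : Finset (Fin n)), Jf 0 (1 + α j.1 (lam j)) (D j.1)) -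
          ∏ j : ({i₁, i₂} : Finset (Fin n)), Jf 0 1 (D j.1)))) =
      ∑ p₁ ∈ Finset.univ.filter (fun p₁ : Sig i₁ × Sig i₁ => p₁.1 ⋖ p₁.2),
        ∑ p₂ ∈ Finset.univ.filter (fun p₂ : Sig i₂ × Sig i₂ => p₂.1 ⋖ p₂.2),
        (-(∑ p : P i₁ i₂,
                ((1 : ℝ) / 2 *
                    (α i₂ p₂ ^ 2 * α i₁ p₁ + 2 * α i₁ p₁ * α i₂ p₂ + α i₁ p₁ +
                      α i₂ p₂ ^ 2 + 2 * α i₂ p₂) * (rp i₁ i₂ p₁ p₂ p : ℝ)) •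
                  (D i₂ * Dp i₁ i₂ p))
        - (∑ p : P i₁ i₂,
                ((1 : ℝ) / 2 *
                    (α i₁ p₁ ^ 2 * α i₂ p₂ + 2 * α i₁ p₁ * α i₂ p₂ + α i₂ p₂ +
                      α i₁ p₁ ^ 2 + 2 * α i₁ p₁) * (rp i₁ i₂ p₁ p₂ p : ℝ)) •
                  (D i₁ * Dp i₁ i₂ p))
        + (∑ p : P i₁ i₂,
                ((α i₁ p₁ * α i₂ p₂ + α i₁ p₁ + α i₂ p₂) * (rp i₁ i₂ p₁ p₂ p : ℝ)) •
                  (S * Dp i₁ i₂ p))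
        + (α i₁ p₁ * α i₂ p₂ + α i₁ p₁ + α i₂ p₂) •
                prj 𝒜 3 (hh {i₁, i₂} (lamOfPair i₁ i₂ p₁ p₂))) := by
    intro i₁ i₂ h12
    have hcard : ({i₁, i₂} : Finset (Fin n)).card = 2 := Finset.card_pair h12.ne
    rw [hcard, neg_one_sq, one_mul, map_sum, sum_lam_pair i₁ i₂ h12.ne]
    apply Finset.sum_congr rfl
    intro p₁ hp₁
    apply Finset.sum_congr rfl
    intro p₂ hp₂
    have hp₁ := (Finset.mem_filter.mp hp₁).2
    have hp₂ := (Finset.mem_filter.mp hp₂).2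
    have hcov : ∀ j : ({i₁, i₂} : Finset (Fin n)),
        (lamOfPair i₁ i₂ p₁ p₂ j).1 ⋖ (lamOfPair i₁ i₂ p₁ p₂ j).2 := by
      rintro ⟨j, hj⟩
      rcases (by simpa using hj : j = i₁ ∨ j = i₂) with rfl | rfl
      · rw [lamOfPair_fst]; exact hp₁
      · rw [lamOfPair_snd _ _ h12.ne]; exact hp₂
    rw [prod_sub_pair i₁ i₂ h12.ne, prod_sub_pair i₁ i₂ h12.ne, lamOfPair_fst,
      lamOfPair_snd _ _ h12.ne,
      prj3_pair 𝒜 S (D i₁) (D i₂) _ hS (hD i₁) (hD i₂) hS1 (hD1 i₁) (hD1 i₂) (α i₁ p₁) (α i₂ p₂)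
        (hhlow _ _ hcov 0 (by omega)) (hhlow _ _ hcov 1 (by omega)),
      hrp2 i₁ i₂ h12 p₁ p₂ hp₁ hp₂]
    simp only [Finset.mul_sum, Finset.smul_sum, mul_smul_comm, smul_smul]
  have hF3 : ∀ i₁ i₂ i₃, i₁ < i₂ → i₂ < i₃ →
      prj 𝒜 3 ((-1 : A) ^ ({i₁, i₂, i₃} : Finset (Fin n)).card * ∑ lam ∈ Finset.univ.filter
        (fun lam : (j : ({i₁, i₂, i₃} : Finset (Fin n))) → Sig j.1 × Sig j.1 =>
          ∀ j : ({i₁, i₂, i₃} : Finset (Fin n)), (lam j).1 ⋖ (lam j).2),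
        hh {i₁, i₂, i₃} lam * (nexp S *
          ((∏ j : ({i₁, i₂, i₃} : Finset (Fin n)), Jf 0 (1 + α j.1 (lam j)) (D j.1)) -
          ∏ j : ({i₁, i₂, i₃} : Finset (Fin n)), Jf 0 1 (D j.1)))) =
      -∑ p₁ ∈ Finset.univ.filter (fun p₁ : Sig i₁ × Sig i₁ => p₁.1 ⋖ p₁.2),
        ∑ p₂ ∈ Finset.univ.filter (fun p₂ : Sig i₂ × Sig i₂ => p₂.1 ⋖ p₂.2),
        ∑ p₃ ∈ Finset.univ.filter (fun p₃ : Sig i₃ × Sig i₃ => p₃.1 ⋖ p₃.2),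
                  ∑ p : P3 i₁ i₂ i₃,
                    ((α i₁ p₁ * α i₂ p₂ * α i₃ p₃ + α i₁ p₁ * α i₂ p₂ +
                        α i₂ p₂ * α i₃ p₃ + α i₁ p₁ * α i₃ p₃ + α i₁ p₁ + α i₂ p₂ +
                        α i₃ p₃) * (r3 i₁ i₂ i₃ p₁ p₂ p₃ p : ℝ)) •
                      Dp3 i₁ i₂ i₃ p := by
    intro i₁ i₂ i₃ h12 h23
    have h13 := h12.trans h23
    have hcard : ({i₁, i₂, i₃} : Finset (Fin n)).card = 3 :=
      Finset.card_eq_three.mpr ⟨i₁, i₂, i₃, h12.ne, h13.ne, h23.ne, rfl⟩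
    rw [hcard, show (-1 : A) ^ 3 = -1 by ring, neg_one_mul, map_neg, map_sum,
      sum_lam_triple i₁ i₂ i₃ h12.ne h13.ne h23.ne]
    congr 1
    apply Finset.sum_congr rfl
    intro p₁ hp₁
    apply Finset.sum_congr rfl
    intro p₂ hp₂
    apply Finset.sum_congr rfl
    intro p₃ hp₃
    have hp₁ := (Finset.mem_filter.mp hp₁).2
    have hp₂ := (Finset.mem_filter.mp hp₂).2
    have hp₃ := (Finset.mem_filter.mp hp₃).2
    have hcov : ∀ j : ({i₁, i₂, i₃} : Finset (Fin n)),
        (lamOfTriple i₁ i₂ i₃ p₁ p₂ p₃ j).1 ⋖ (lamOfTriple i₁ i₂ i₃ p₁ p₂ p₃ j).2 := by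
      rintro ⟨j, hj⟩
      rcases (by simpa using hj : j = i₁ ∨ j = i₂ ∨ j = i₃) with rfl | rfl | rfl
      · rw [lamOfTriple_fst]; exact hp₁
      · rw [lamOfTriple_snd _ _ _ h12.ne]; exact hp₂
      · rw [lamOfTriple_trd _ _ _ h13.ne h23.ne]; exact hp₃
    rw [prod_sub_triple i₁ i₂ i₃ h12.ne h13.ne h23.ne,
      prod_sub_triple i₁ i₂ i₃ h12.ne h13.ne h23.ne, lamOfTriple_fst,
      lamOfTriple_snd _ _ _ h12.ne, lamOfTriple_trd _ _ _ h13.ne h23.ne,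
      prj3_triple 𝒜 S (D i₁) (D i₂) (D i₃) _ hS (hD i₁) (hD i₂) (hD i₃) hS1 (hD1 i₁) (hD1 i₂)
        (hD1 i₃) (α i₁ p₁) (α i₂ p₂) (α i₃ p₃)
        (hhlow _ _ hcov 0 (by omega)) (hhlow _ _ hcov 1 (by omega)) (hhlow _ _ hcov 2 (by omega)),
      hr3 i₁ i₂ i₃ h12 h23 p₁ p₂ p₃ hp₁ hp₂ hp₃]
    simp only [Finset.smul_sum, smul_smul]
  rw [Finset.sum_congr rfl (fun i _ => hF1 i),
    Finset.sum_congr rfl (fun i₁ _ => Finset.sum_congr rfl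
      (fun i₂ h => hF2 i₁ i₂ (Finset.mem_filter.mp h).2)),
    Finset.sum_congr rfl (fun i₁ _ => Finset.sum_congr rfl
      (fun i₂ h => Finset.sum_congr rfl
        (fun i₃ h' => hF3 i₁ i₂ i₃ (Finset.mem_filter.mp h).2 (Finset.mem_filter.mp h').2)))]
  simp only [Finset.sum_add_distrib, Finset.sum_sub_distrib, Finset.sum_neg_distrib]
  abel
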